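/- arXiv:1101.2875 — 2 statements merged into one kernel-verified Lean document; each statement's English description precedes it below -/
import Mathlib

section
/- For every integer n ≥ 0, all real x, y, ρ, q with |q| < 1, the Al-Salam–Chihara polynomial has the expansion P_n(x|y,ρ,q) = Σ_{k=0}^{⌊n/2⌋} [n choose k]_q · [n−k choose k]_q · [k]_q! · q^{k(k−1)} · ρ^{2k} · Σ_{s=0}^{n−2k} (−1)^s · [n−2k choose s]_q · q^{s(s−1)/2} · (q^k·ρ)^s · H_{n−2k−s}(x|q) · H_s(y|q). -/
noncomputable section

open Finset

/-- The q-integer `[n]_q = 1 + q + ⋯ + q^{n-1}`. -/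
def qInt (q : ℝ) (n : ℕ) : ℝ := ∑ i ∈ Finset.range n, q ^ i

/-- The q-factorial `[n]_q!`. -/
def qFact (q : ℝ) (n : ℕ) : ℝ := ∏ j ∈ Finset.range n, qInt q (j + 1)

/-- The q-binomial coefficient. -/
def qBinom (q : ℝ) (n k : ℕ) : ℝ :=
  if k ≤ n then qFact q n / (qFact q (n - k) * qFact q k) else 0

/-- The finite q-Pochhammer symbol `(a;q)_n`. -/
def qPoch (a q : ℝ) (n : ℕ) : ℝ := ∏ j ∈ Finset.range n, (1 - a * q ^ j)

/-- The infinite q-Pochhammer symbol `(a;q)_∞`. -/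
def qPochInf (a q : ℝ) : ℝ := ∏' j : ℕ, (1 - a * q ^ j)

/-- The q-Hermite polynomials `H_n(x|q)`. -/
def qHermite (q : ℝ) : ℕ → ℝ → ℝ
  | 0, _ => 1
  | 1, x => x
  | n + 2, x => x * qHermite q (n + 1) x - qInt q (n + 1) * qHermite q n x

/-- The rescaled q-ultraspherical polynomials `R_n(x|β,q)`. -/
def qUltra (q β : ℝ) : ℕ → ℝ → ℝ
  | 0, _ => 1
  | 1, x => (1 - β) * x
  | n + 2, x => (1 - β * q ^ (n + 1)) * x * qUltra q β (n + 1) x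
      - (1 - β ^ 2 * q ^ n) * qInt q (n + 1) * qUltra q β n x

/-- The Al-Salam–Chihara polynomials `P_n(x|y,ρ,q)`. -/
def ASC (q y ρ : ℝ) : ℕ → ℝ → ℝ
  | 0, _ => 1
  | 1, x => x - ρ * y
  | n + 2, x => (x - ρ * y * q ^ (n + 1)) * ASC q y ρ (n + 1) x
      - (1 - ρ ^ 2 * q ^ n) * qInt q (n + 1) * ASC q y ρ n x

/-- The polynomials `B_n(y|q)` (q⁻¹-Hermite related). -/
def qB (q : ℝ) : ℕ → ℝ → ℝ
  | 0, _ => 1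
  | 1, y => -y
  | n + 2, y => -q ^ (n + 1) * y * qB q (n + 1) y + q ^ n * qInt q (n + 1) * qB q n y

/-- The big q-Hermite polynomials `H_n(x|a,q)`. -/
def bigqHermite (q a : ℝ) : ℕ → ℝ → ℝ
  | 0, _ => 1
  | 1, x => x - a
  | n + 2, x => (x - a * q ^ (n + 1)) * bigqHermite q a (n + 1) x
      - qInt q (n + 1) * bigqHermite q a n x

/-- The probabilistic Hermite polynomials `H_n(x)`. -/
def probHermite : ℕ → ℝ → ℝ
  | 0, _ => 1
  | 1, x => x
  | n + 2, x => x * probHermite (n + 1) x - (n + 1) * probHermite n x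

/-- The probabilistic Hermite polynomials on ℂ. -/
def probHermiteC : ℕ → ℂ → ℂ
  | 0, _ => 1
  | 1, x => x
  | n + 2, x => x * probHermiteC (n + 1) x - (n + 1) * probHermiteC n x

/-- The Chebyshev polynomials of the second kind. -/
def chebU : ℕ → ℝ → ℝ
  | 0, _ => 1
  | 1, x => 2 * x
  | n + 2, x => 2 * x * chebU (n + 1) x - chebU n x

/-- The Chebyshev polynomials of the first kind. -/
def chebT : ℕ → ℝ → ℝ
  | 0, _ => 1
  | 1, x => x
  | n + 2, x => 2 * x * chebT (n + 1) x - chebT n x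

/-- `W_k(x,y,t|q)`. -/
def Wk (q x y t : ℝ) (k : ℕ) : ℝ :=
  (1 - t ^ 2 * q ^ (2 * k)) ^ 2 - (1 - q) * x * y * t * q ^ k * (1 + t ^ 2 * q ^ (2 * k))
    + (1 - q) * t ^ 2 * q ^ (2 * k) * (x ^ 2 + y ^ 2)

/-- `V_k(x,a|q)`. -/
def Vk (q x a : ℝ) (k : ℕ) : ℝ :=
  1 - (1 - q) * a * x * q ^ k + (1 - q) * a ^ 2 * q ^ (2 * k)

/-- `L_k(x,a|q)`. -/
def Lk (q x a : ℝ) (k : ℕ) : ℝ :=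
  (1 + a * q ^ k) ^ 2 - (1 - q) * x ^ 2 * a ^ 2 * q ^ k

/-- The support interval `S(q) = [-2/√(1-q), 2/√(1-q)]` for `|q| < 1`. -/
def Sq (q : ℝ) : Set ℝ := Set.Icc (-(2 / Real.sqrt (1 - q))) (2 / Real.sqrt (1 - q))

/-!
Write `D` for the `q`-derivative in `t`, so that `D t ^ n = [n]_q t ^ (n - 1)`. The three-term
recurrences say that `H(x; t) = ∑ H_n(x|q) t ^ n / [n]_q!` satisfies `D H = (x - t) H`, and that
`P(t) = ∑ P_n(x|y,ρ,q) t ^ n / [n]_q!` satisfies `D P = (x - t) P + ρ (ρ t - y) P(q t)`. If `B`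
has `B(0) = 1` and `D B = (t - y) B(q t)`, the `q`-Leibniz rule shows that `B(ρ t) H(x; t)` solves
the equation of `P`, and such an equation determines its solution from the constant term.

With `G(t) = ∑ (-1) ^ s q ^ (s choose 2) H_s(y|q) t ^ s / [s]_q!`, the series
`B(t) = ∑ k, q ^ (k (k - 1)) t ^ (2 k) / [k]_q! * G(q ^ k t)` is such a solution: applying `D`
termwise, the error telescopes. Cutting the sum off after `k = N` leaves a defect divisible by
`t ^ (2 N + 1)` in the equation, so the coefficients up to degree `2 N + 1` are still right, and
for `N = ⌊n / 2⌋` the coefficient of `t ^ n` is the expansion of `P_n`.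
-/

open PowerSeries

lemma qInt_zero (q : ℝ) : qInt q 0 = 0 := sum_range_zero _

lemma qInt_add (q : ℝ) (m n : ℕ) : qInt q (m + n) = qInt q m + q ^ m * qInt q n := by
  simp only [qInt, sum_range_add, pow_add, mul_sum]

lemma qInt_succ_ne_zero {q : ℝ} (hq : q ≠ -1) (n : ℕ) : qInt q (n + 1) ≠ 0 :=
  geom_sum_ne_zero hq n.succ_ne_zero

lemma qFact_zero (q : ℝ) : qFact q 0 = 1 := prod_range_zero _

lemma qFact_succ (q : ℝ) (n : ℕ) : qFact q (n + 1) = qFact q n * qInt q (n + 1) :=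
  prod_range_succ _ _

lemma qFact_ne_zero {q : ℝ} (hq : q ≠ -1) (n : ℕ) : qFact q n ≠ 0 :=
  prod_ne_zero_iff.mpr fun j _ => qInt_succ_ne_zero hq j

lemma qBinom_mul_qBinom_mul_qFact {q : ℝ} (hq : q ≠ -1) {n k : ℕ} (hk : 2 * k ≤ n) :
    qBinom q n k * qBinom q (n - k) k * qFact q k =
      qFact q n / (qFact q k * qFact q (n - 2 * k)) := by
  have h₁ := qFact_ne_zero hq (n - k)
  have h₂ := qFact_ne_zero hq k
  rw [qBinom, qBinom, if_pos (by lia), if_pos (by lia), show n - k - k = n - 2 * k by lia]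
  field_simp

lemma qHermite_succ (q x : ℝ) (n : ℕ) :
    qHermite q (n + 1) x = x * qHermite q n x - qInt q n * qHermite q (n - 1) x := by
  cases n with
  | zero => simp [qHermite, qInt_zero]
  | succ n => simp [qHermite]

lemma ASC_succ (q y ρ x : ℝ) (n : ℕ) :
    ASC q y ρ (n + 1) x = (x - ρ * y * q ^ n) * ASC q y ρ n x
      - (1 - ρ ^ 2 * q ^ (n - 1)) * qInt q n * ASC q y ρ (n - 1) x := by
  cases n with
  | zero => simp [ASC, qInt_zero]
  | succ n => simp [ASC]

lemma rescale_C {R : Type*} [CommSemiring R] (a b : R) : rescale a (C b) = C b := by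
  ext n
  by_cases h : n = 0 <;> simp [coeff_C, h]

lemma X_pow_dvd_rescale {R : Type*} [CommSemiring R] {m : ℕ} {F : R⟦X⟧} (h : X ^ m ∣ F) (a : R) :
    X ^ m ∣ rescale a F := by
  rw [X_pow_dvd_iff] at h ⊢
  intro d hd
  rw [coeff_rescale, h d hd, mul_zero]

/-- The Jackson `q`-derivative of a formal power series, `t ^ n ↦ [n]_q t ^ (n - 1)`. It is defined
on coefficients rather than as `(F(qt) - F(t)) / ((q - 1) t)` so that `q = 1` is allowed. -/
def qDeriv (q : ℝ) : ℝ⟦X⟧ →ₗ[ℝ] ℝ⟦X⟧ where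
  toFun F := PowerSeries.mk fun n => qInt q (n + 1) * coeff (n + 1) F
  map_add' F G := by ext n; simp [mul_add]
  map_smul' a F := by ext n; simp [mul_left_comm]

lemma coeff_qDeriv (q : ℝ) (F : ℝ⟦X⟧) (n : ℕ) :
    coeff n (qDeriv q F) = qInt q (n + 1) * coeff (n + 1) F := by
  simp [qDeriv]

lemma qDeriv_C_mul (q a : ℝ) (F : ℝ⟦X⟧) : qDeriv q (C a * F) = C a * qDeriv q F := by
  rw [← smul_eq_C_mul, map_smul, smul_eq_C_mul]

lemma qDeriv_mul (q : ℝ) (F G : ℝ⟦X⟧) :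
    qDeriv q (F * G) = qDeriv q F * G + rescale q F * qDeriv q G := by
  ext n
  have split : qInt q (n + 1) * coeff (n + 1) (F * G) =
      ∑ p ∈ antidiagonal (n + 1), qInt q p.1 * coeff p.1 F * coeff p.2 G +
        ∑ p ∈ antidiagonal (n + 1), q ^ p.1 * coeff p.1 F * (qInt q p.2 * coeff p.2 G) := by
    rw [coeff_mul, mul_sum, ← sum_add_distrib]
    refine sum_congr rfl fun p hp => ?_
    rw [← mem_antidiagonal.mp hp, qInt_add]
    ring
  rw [coeff_qDeriv, split, Nat.sum_antidiagonal_succ, Nat.sum_antidiagonal_succ']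
  simp [coeff_mul, coeff_qDeriv, qInt_zero]

lemma qDeriv_rescale (q a : ℝ) (F : ℝ⟦X⟧) :
    qDeriv q (rescale a F) = C a * rescale a (qDeriv q F) := by
  ext n
  simp only [coeff_qDeriv, coeff_rescale, coeff_C_mul]
  ring

lemma qDeriv_X_pow_succ (q : ℝ) (n : ℕ) :
    qDeriv q (X ^ (n + 1)) = C (qInt q (n + 1)) * X ^ n := by
  ext m
  by_cases h : m = n <;> simp [coeff_qDeriv, coeff_X_pow, h]

lemma X_pow_succ_dvd_of_qDeriv {q : ℝ} (hq : q ≠ -1) {m : ℕ} {F : ℝ⟦X⟧}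
    (h₀ : constantCoeff F = 0) (h : X ^ m ∣ qDeriv q F) : X ^ (m + 1) ∣ F := by
  rw [X_pow_dvd_iff] at h ⊢
  rintro (_ | d) hd
  · simpa using h₀
  · have hd' := h d (by lia)
    rw [coeff_qDeriv] at hd'
    exact (mul_eq_zero.mp hd').resolve_left (qInt_succ_ne_zero hq d)

lemma X_pow_succ_dvd_of_qDeriv_sub {q : ℝ} (hq : q ≠ -1) {m : ℕ} {F : ℝ⟦X⟧} (U V : ℝ⟦X⟧)
    (h₀ : constantCoeff F = 0) (h : X ^ m ∣ qDeriv q F - (U * F + V * rescale q F)) :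
    X ^ (m + 1) ∣ F := by
  induction m with
  | zero => exact X_pow_succ_dvd_of_qDeriv hq h₀ (by simp)
  | succ m ih =>
    have hF : X ^ (m + 1) ∣ F := ih ((pow_dvd_pow X m.le_succ).trans h)
    refine X_pow_succ_dvd_of_qDeriv hq h₀ ((dvd_sub_left ?_).mp h)
    exact dvd_add (hF.mul_left U) ((X_pow_dvd_rescale hF q).mul_left V)

/-- The `q`-exponential generating function `∑ a n * t ^ n / [n]_q!` of a sequence. -/
def qEGF (q : ℝ) (a : ℕ → ℝ) : ℝ⟦X⟧ := PowerSeries.mk fun n => a n / qFact q n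

lemma coeff_qEGF (q : ℝ) (a : ℕ → ℝ) (n : ℕ) : coeff n (qEGF q a) = a n / qFact q n :=
  coeff_mk _ _

lemma constantCoeff_qEGF (q : ℝ) (a : ℕ → ℝ) : constantCoeff (qEGF q a) = a 0 := by
  rw [← coeff_zero_eq_constantCoeff_apply, coeff_qEGF, qFact_zero, div_one]

lemma rescale_qEGF (q c : ℝ) (a : ℕ → ℝ) :
    rescale c (qEGF q a) = qEGF q fun n => c ^ n * a n := by
  ext n
  rw [coeff_rescale, coeff_qEGF, coeff_qEGF, mul_div_assoc]

lemma qDeriv_qEGF {q : ℝ} (hq : q ≠ -1) (a : ℕ → ℝ) :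
    qDeriv q (qEGF q a) = qEGF q fun n => a (n + 1) := by
  ext n
  have h := qInt_succ_ne_zero hq n
  rw [coeff_qDeriv, coeff_qEGF, coeff_qEGF, qFact_succ]
  field_simp

lemma X_mul_qEGF {q : ℝ} (hq : q ≠ -1) (a : ℕ → ℝ) :
    X * qEGF q a = qEGF q fun n => qInt q n * a (n - 1) := by
  ext (_ | n)
  · simp [coeff_qEGF, qInt_zero]
  · have h := qInt_succ_ne_zero hq n
    rw [coeff_succ_X_mul, coeff_qEGF, coeff_qEGF, qFact_succ, Nat.add_sub_cancel]
    field_simp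

lemma qFact_mul_coeff_qEGF_mul (q : ℝ) (a b : ℕ → ℝ) (n : ℕ) :
    qFact q n * coeff n (qEGF q a * qEGF q b) =
      ∑ s ∈ range (n + 1), qBinom q n s * a s * b (n - s) := by
  rw [coeff_mul, Nat.sum_antidiagonal_eq_sum_range_succ
    (fun i j => coeff i (qEGF q a) * coeff j (qEGF q b)), mul_sum]
  refine sum_congr rfl fun s hs => ?_
  rw [coeff_qEGF, coeff_qEGF, qBinom, if_pos (mem_range_succ_iff.mp hs)]
  ring

/-- The generating function `∑ H_n(x|q) t ^ n / [n]_q!` of the `q`-Hermite polynomials. -/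
def qHermiteSeries (q x : ℝ) : ℝ⟦X⟧ := qEGF q fun n => qHermite q n x

/-- The generating function `∑ P_n(x|y,ρ,q) t ^ n / [n]_q!` of the Al-Salam–Chihara
polynomials. -/
def ascSeries (q y ρ x : ℝ) : ℝ⟦X⟧ := qEGF q fun n => ASC q y ρ n x

/-- The twisted generating function `∑ (-1) ^ n q ^ (n choose 2) H_n(y|q) t ^ n / [n]_q!`, from
which the reciprocal of the generating function of the `H_n(y|q)` is assembled. -/
def twistedQHermiteSeries (q y : ℝ) : ℝ⟦X⟧ :=
  qEGF q fun n => (-1) ^ n * q ^ (n * (n - 1) / 2) * qHermite q n y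

lemma qDeriv_qHermiteSeries {q : ℝ} (hq : q ≠ -1) (x : ℝ) :
    qDeriv q (qHermiteSeries q x) = (C x - X) * qHermiteSeries q x := by
  rw [sub_mul, qHermiteSeries, qDeriv_qEGF hq, X_mul_qEGF hq]
  ext n
  simp only [map_sub, coeff_C_mul, coeff_qEGF, qHermite_succ]
  ring

lemma qDeriv_ascSeries {q : ℝ} (hq : q ≠ -1) (y ρ x : ℝ) :
    qDeriv q (ascSeries q y ρ x) =
      (C x - X) * ascSeries q y ρ x + C ρ * (C ρ * X - C y) * rescale q (ascSeries q y ρ x) := by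
  have expand (F G : ℝ⟦X⟧) : (C x - X) * F + C ρ * (C ρ * X - C y) * G =
      C x * F - X * F + C ρ * (C ρ * (X * G) - C y * G) := by ring
  rw [expand, ascSeries, qDeriv_qEGF hq, rescale_qEGF, X_mul_qEGF hq, X_mul_qEGF hq]
  ext n
  simp only [map_add, map_sub, coeff_C_mul, coeff_qEGF, ASC_succ]
  ring

lemma qDeriv_twistedQHermiteSeries {q : ℝ} (hq : q ≠ -1) (y : ℝ) :
    qDeriv q (twistedQHermiteSeries q y) =
      -(C y * rescale q (twistedQHermiteSeries q y)
        + C q * (X * rescale (q ^ 2) (twistedQHermiteSeries q y))) := by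
  rw [twistedQHermiteSeries, qDeriv_qEGF hq, rescale_qEGF, rescale_qEGF, X_mul_qEGF hq]
  ext n
  simp only [map_neg, map_add, coeff_C_mul, coeff_qEGF, qHermite_succ, Nat.triangle_succ]
  cases n with
  | zero => simp [qInt_zero, neg_div, mul_div_assoc]
  | succ n =>
    rw [Nat.triangle_succ, Nat.add_sub_cancel]
    ring

/-- The series `q ^ (k (k - 1)) t ^ (2 k) / [k]_q! * G(q ^ k t)`, where `G` is the twisted
generating function; the sum over `k` of these terms is the reciprocal of
`∑ H_n(y|q) t ^ n / [n]_q!`. -/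
def reciprocalTerm (q y : ℝ) (k : ℕ) : ℝ⟦X⟧ :=
  C (q ^ (k * (k - 1)) / qFact q k) * X ^ (2 * k) * rescale (q ^ k) (twistedQHermiteSeries q y)

/-- The amount by which the sum of the reciprocal terms up to `k` fails to satisfy the
`q`-difference equation `D F = (t - y) F(q t)` of the whole series. -/
def reciprocalDefect (q y : ℝ) (k : ℕ) : ℝ⟦X⟧ :=
  C (q ^ (k * (k + 1)) / qFact q k) * X ^ (2 * k + 1) *
    (rescale (q ^ (k + 1)) (twistedQHermiteSeries q y)
      + C (q ^ (k + 1)) * rescale (q ^ (k + 2)) (twistedQHermiteSeries q y))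

lemma qDeriv_reciprocalTerm_zero {q : ℝ} (hq : q ≠ -1) (y : ℝ) :
    qDeriv q (reciprocalTerm q y 0) =
      (X - C y) * rescale q (reciprocalTerm q y 0) - reciprocalDefect q y 0 := by
  simp only [reciprocalTerm, reciprocalDefect, qFact_zero, mul_zero, zero_mul, zero_add, pow_zero,
    pow_one, div_one, map_one, one_mul, rescale_one, RingHom.id_apply,
    qDeriv_twistedQHermiteSeries hq]
  ring

lemma qDeriv_reciprocalTerm_succ {q : ℝ} (hq : q ≠ -1) (y : ℝ) (k : ℕ) :
    qDeriv q (reciprocalTerm q y (k + 1)) =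
      (X - C y) * rescale q (reciprocalTerm q y (k + 1))
        + reciprocalDefect q y k - reciprocalDefect q y (k + 1) := by
  set c := q ^ (k * (k + 1)) / qFact q (k + 1) with hc
  have hck : q ^ (k * (k + 1)) / qFact q k = c * qInt q (k + 1) := by
    have h := qInt_succ_ne_zero hq k
    rw [hc, qFact_succ]
    field_simp
  have hck' : q ^ ((k + 1) * (k + 1 + 1)) / qFact q (k + 1) = c * (q ^ (k + 1)) ^ 2 := by
    rw [hc]
    ring
  -- Splitting `X ^ (2 * (k + 1))` around the rescaled series makes the `q`-Leibniz rule produce the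
  -- factor `[k + 1]_q`, which cancels in `[k + 1]_q!`, instead of `[2 * (k + 1)]_q`.
  have hterm : reciprocalTerm q y (k + 1) =
      C c * (X ^ (k + 1) *
        (rescale (q ^ (k + 1)) (twistedQHermiteSeries q y) * X ^ (k + 1))) := by
    rw [reciprocalTerm, Nat.add_sub_cancel, mul_comm (k + 1) k, ← hc]
    ring
  have hpow : q ^ 2 * q ^ (k + 1) = q ^ (k + 1 + 2) := by ring
  rw [hterm, reciprocalDefect, reciprocalDefect, hck, hck', qDeriv_C_mul, qDeriv_mul, qDeriv_mul,
    qDeriv_X_pow_succ, qDeriv_rescale, qDeriv_twistedQHermiteSeries hq]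
  simp only [map_neg, map_add, map_mul, map_pow, rescale_C, rescale_X, rescale_rescale,
    ← pow_succ, ← pow_succ', hpow]
  ring

lemma qDeriv_sum_reciprocalTerm {q : ℝ} (hq : q ≠ -1) (y : ℝ) (N : ℕ) :
    qDeriv q (∑ k ∈ range (N + 1), reciprocalTerm q y k) =
      (X - C y) * rescale q (∑ k ∈ range (N + 1), reciprocalTerm q y k)
        - reciprocalDefect q y N := by
  induction N with
  | zero => simpa using qDeriv_reciprocalTerm_zero hq y
  | succ N ih =>
    rw [sum_range_succ, map_add, map_add, ih, qDeriv_reciprocalTerm_succ hq]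
    ring

lemma X_pow_dvd_reciprocalDefect (q y : ℝ) (k : ℕ) :
    X ^ (2 * k + 1) ∣ reciprocalDefect q y k :=
  (dvd_mul_left _ _).mul_right _

lemma constantCoeff_sum_reciprocalTerm (q y : ℝ) (N : ℕ) :
    constantCoeff (∑ k ∈ range (N + 1), reciprocalTerm q y k) = 1 := by
  rw [map_sum, sum_range_succ']
  simp [reciprocalTerm, twistedQHermiteSeries, constantCoeff_qEGF, qHermite, qFact_zero]

lemma X_pow_dvd_ascSeries_sub {q : ℝ} (hq : q ≠ -1) (x y ρ : ℝ) (N : ℕ) :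
    X ^ (2 * N + 2) ∣ ascSeries q y ρ x -
      rescale ρ (∑ k ∈ range (N + 1), reciprocalTerm q y k) * qHermiteSeries q x := by
  set B := ∑ k ∈ range (N + 1), reciprocalTerm q y k with hB
  set H := qHermiteSeries q x with hH
  refine X_pow_succ_dvd_of_qDeriv_sub hq (C x - X) (C ρ * (C ρ * X - C y)) ?_ ?_
  · have hB₀ : constantCoeff (rescale ρ B) = 1 := by
      rw [← coeff_zero_eq_constantCoeff_apply, coeff_rescale, coeff_zero_eq_constantCoeff_apply,
        constantCoeff_sum_reciprocalTerm, pow_zero, one_mul]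
    rw [map_sub, map_mul, hB₀, hH, ascSeries, qHermiteSeries, constantCoeff_qEGF,
      constantCoeff_qEGF, ASC, qHermite, one_mul, sub_self]
  · have hcomm : rescale q (rescale ρ B) = rescale ρ (rescale q B) := by
      rw [rescale_rescale, rescale_rescale, mul_comm]
    have hBρ : qDeriv q (rescale ρ B) =
        C ρ * ((C ρ * X - C y) * rescale q (rescale ρ B) - rescale ρ (reciprocalDefect q y N)) := by
      rw [qDeriv_rescale, hB, qDeriv_sum_reciprocalTerm hq, ← hB, hcomm]
      simp only [map_sub, map_mul, rescale_X, rescale_C]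
    have hdefect : X ^ (2 * N + 1) ∣
        C ρ * rescale q H * rescale ρ (reciprocalDefect q y N) :=
      (X_pow_dvd_rescale (X_pow_dvd_reciprocalDefect q y N) ρ).mul_left _
    convert hdefect using 1
    rw [mul_comm (rescale ρ B), map_sub, map_sub, map_mul (rescale q), qDeriv_mul,
      qDeriv_ascSeries hq, hBρ, qDeriv_qHermiteSeries hq]
    ring

lemma qFact_mul_coeff_rescale_twistedQHermiteSeries_mul (q a x y : ℝ) (m : ℕ) :
    qFact q m * coeff m (rescale a (twistedQHermiteSeries q y) * qHermiteSeries q x) =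
      ∑ s ∈ range (m + 1), (-1 : ℝ) ^ s * qBinom q m s * q ^ (s * (s - 1) / 2) * a ^ s *
        qHermite q (m - s) x * qHermite q s y := by
  rw [twistedQHermiteSeries, qHermiteSeries, rescale_qEGF, qFact_mul_coeff_qEGF_mul]
  exact sum_congr rfl fun s _ => by ring

lemma qFact_mul_coeff_rescale_reciprocalTerm_mul {q : ℝ} (hq : q ≠ -1) (x y ρ : ℝ) {n k : ℕ}
    (hk : 2 * k ≤ n) :
    qFact q n * coeff n (rescale ρ (reciprocalTerm q y k) * qHermiteSeries q x) =
      qBinom q n k * qBinom q (n - k) k * qFact q k * q ^ (k * (k - 1)) * ρ ^ (2 * k) *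
        ∑ s ∈ range (n - 2 * k + 1),
          (-1 : ℝ) ^ s * qBinom q (n - 2 * k) s * q ^ (s * (s - 1) / 2) * (q ^ k * ρ) ^ s *
            qHermite q (n - 2 * k - s) x * qHermite q s y := by
  have hfactor : rescale ρ (reciprocalTerm q y k) * qHermiteSeries q x =
      C (q ^ (k * (k - 1)) / qFact q k * ρ ^ (2 * k)) * (X ^ (2 * k) *
        (rescale (q ^ k * ρ) (twistedQHermiteSeries q y) * qHermiteSeries q x)) := by
    simp only [reciprocalTerm, map_mul, map_pow, rescale_C, rescale_X, rescale_rescale]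
    ring
  have h := qFact_ne_zero hq (n - 2 * k)
  rw [← qFact_mul_coeff_rescale_twistedQHermiteSeries_mul, qBinom_mul_qBinom_mul_qFact hq hk,
    hfactor, coeff_C_mul, coeff_X_pow_mul', if_pos hk]
  field_simp

theorem ASC_expansion_in_qHermite_general (n : ℕ) (x y ρ q : ℝ) (hq : q ≠ -1) :
    ASC q y ρ n x =
      ∑ k ∈ Finset.range (n / 2 + 1),
        qBinom q n k * qBinom q (n - k) k * qFact q k * q ^ (k * (k - 1)) * ρ ^ (2 * k) *
          ∑ s ∈ Finset.range (n - 2 * k + 1),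
            (-1 : ℝ) ^ s * qBinom q (n - 2 * k) s * q ^ (s * (s - 1) / 2) * (q ^ k * ρ) ^ s *
              qHermite q (n - 2 * k - s) x * qHermite q s y := by
  have hcoeff : coeff n (ascSeries q y ρ x) = coeff n
      (rescale ρ (∑ k ∈ range (n / 2 + 1), reciprocalTerm q y k) * qHermiteSeries q x) := by
    rw [← sub_eq_zero, ← map_sub]
    exact X_pow_dvd_iff.mp (X_pow_dvd_ascSeries_sub hq x y ρ (n / 2)) n (by lia)
  calc ASC q y ρ n x
      = qFact q n * coeff n (ascSeries q y ρ x) := by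
        rw [ascSeries, coeff_qEGF, mul_div_cancel₀ _ (qFact_ne_zero hq n)]
    _ = ∑ k ∈ range (n / 2 + 1),
          qFact q n * coeff n (rescale ρ (reciprocalTerm q y k) * qHermiteSeries q x) := by
        rw [hcoeff, map_sum, sum_mul, map_sum, mul_sum]
    _ = _ := sum_congr rfl fun k hk =>
        qFact_mul_coeff_rescale_reciprocalTerm_mul hq x y ρ (by have := mem_range.mp hk; lia)

/-- expansion of Al-Salam–Chihara polynomials in q-Hermite polynomials. -/
theorem ASC_expansion_in_qHermite (n : ℕ) (x y ρ q : ℝ) (hq : |q| < 1) :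
    ASC q y ρ n x =
      ∑ k ∈ Finset.range (n / 2 + 1),
        qBinom q n k * qBinom q (n - k) k * qFact q k * q ^ (k * (k - 1)) * ρ ^ (2 * k) *
          ∑ s ∈ Finset.range (n - 2 * k + 1),
            (-1 : ℝ) ^ s * qBinom q (n - 2 * k) s * q ^ (s * (s - 1) / 2) * (q ^ k * ρ) ^ s *
              qHermite q (n - 2 * k - s) x * qHermite q s y :=
  ASC_expansion_in_qHermite_general n x y ρ q (neg_lt_of_abs_lt hq).ne'
end
end

section
/- (Mehler formula) For all real x, y and all real ρ with |ρ| < 1, the series Σ_{n=0}^∞ (ρⁿ/n!)·H_n(x)·H_n(y) converges and equals (1/√(1−ρ²))·exp((x² + y²)/2)·exp(−(x² + y² − 2ρxy)/(2(1−ρ²))). -/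
noncomputable section

open Finset

/-!
If `Z` is a standard Gaussian variable, then `H_n(x) = E (x + iZ)^n`: by Gaussian integration by
parts the right-hand side satisfies the recurrence of the Hermite polynomials. With an independent
copy `Z'` of `Z`, the Mehler series is therefore the expectation of the exponential series of
`ρ (x + iZ) (y + iZ')`. Since `|(x + iZ) (y + iZ')| ≤ (|x + iZ|² + |y + iZ'|²) / 2`, the terms
are dominated by `exp (|ρ| |x + iZ|² / 2) * exp (|ρ| |y + iZ'|² / 2)`, which is integrable exactly
when `|ρ| < 1`. So sum and expectation can be interchanged, and
`E exp (ρ (x + iZ) (y + iZ'))` is an explicit Gaussian integral.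
-/

open MeasureTheory ProbabilityTheory Complex
open scoped NNReal

theorem ofReal_mul_cpow {r : ℝ} (hr : 0 < r) {z : ℂ} (hz : z ≠ 0) (s : ℂ) :
    (r * z) ^ s = (r : ℂ) ^ s * z ^ s := by
  have hr' : (r : ℂ) ≠ 0 := ofReal_ne_zero.2 hr.ne'
  rw [cpow_def_of_ne_zero (mul_ne_zero hr' hz), cpow_def_of_ne_zero hr', cpow_def_of_ne_zero hz,
    log_ofReal_mul hr hz, ofReal_log hr.le, add_mul, Complex.exp_add]

theorem sqrt_ofReal_of_nonneg {r : ℝ} (hr : 0 ≤ r) : (r : ℂ).sqrt = √r :=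
  Complex.sqrt_of_nonneg (by exact_mod_cast hr)

theorem ofReal_div_cpow_one_div_two {r : ℝ} (hr : 0 < r) {z : ℂ} (hz : 0 < z.re) :
    (r / z) ^ (1 / 2 : ℂ) = √r / z.sqrt := by
  have hz0 : z ≠ 0 := fun h => by simp [h] at hz
  have harg : z.arg ≠ Real.pi := (mem_slitPlane_iff_arg.1 (.inl hz)).1
  rw [div_eq_mul_inv, ofReal_mul_cpow hr (inv_ne_zero hz0), inv_cpow _ _ harg, one_div,
    ← Complex.sqrt, ← Complex.sqrt, sqrt_ofReal_of_nonneg hr.le, div_eq_mul_inv]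

theorem hasSum_integral_pow_div_factorial {α : Type*} [MeasurableSpace α] {P : Measure α}
    {F : α → ℂ} (hF : AEStronglyMeasurable F P)
    (hexp : Integrable (fun a => Real.exp ‖F a‖) P) :
    HasSum (fun n : ℕ => (∫ a, F a ^ n ∂P) / n.factorial) (∫ a, cexp (F a) ∂P) := by
  have hsum (a : α) : HasSum (fun n : ℕ => ‖F a‖ ^ n / n.factorial) (Real.exp ‖F a‖) := by
    rw [Real.exp_eq_exp_ℝ]
    exact NormedSpace.expSeries_div_hasSum_exp _
  simp only [← integral_div]
  refine hasSum_integral_of_dominated_convergence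
    (fun n a => ‖F a‖ ^ n / n.factorial) (fun n => by fun_prop)
    (fun n => ae_of_all _ fun a => by simp) (ae_of_all _ fun a => (hsum a).summable) ?_
    (ae_of_all _ fun a => ?_)
  · simpa only [(hsum _).tsum_eq] using hexp
  · rw [Complex.exp_eq_exp_ℂ]
    exact NormedSpace.expSeries_div_hasSum_exp _

section Gaussian

variable {μ : ℝ} {v : ℝ≥0}

theorem integrable_gaussianReal_iff_integrable_smul {E : Type*} [NormedAddCommGroup E]
    [NormedSpace ℝ E] {f : ℝ → E} (hv : v ≠ 0) :
    Integrable f (gaussianReal μ v) ↔ Integrable fun t => gaussianPDFReal μ v t • f t := by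
  simp only [gaussianReal_of_var_ne_zero μ hv, integrable_withDensity_iff_integrable_smul'
    (measurable_gaussianPDF μ v) (ae_of_all _ fun _ => gaussianPDF_lt_top), toReal_gaussianPDF]

theorem hasDerivAt_gaussianPDFReal (hv : v ≠ 0) (t : ℝ) :
    HasDerivAt (gaussianPDFReal μ v) (-((t - μ) / v * gaussianPDFReal μ v t)) t := by
  have hv' : (v : ℝ) ≠ 0 := by exact_mod_cast hv
  have hq : HasDerivAt (fun t => -(t - μ) ^ 2 / (2 * v)) (-((t - μ) / v)) t := by
    refine ((((hasDerivAt_id' t).sub_const μ).fun_pow 2).fun_neg.div_const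
      (2 * (v : ℝ))).congr_deriv ?_
    field
  refine (hq.exp.const_mul (√(2 * Real.pi * v))⁻¹).congr_deriv ?_
  rw [gaussianPDFReal]
  ring

theorem integral_sub_smul_gaussianReal {E : Type*} [NormedAddCommGroup E] [NormedSpace ℝ E]
    [CompleteSpace E] {f f' : ℝ → E} (hff' : ∀ t, HasDerivAt f (f' t) t)
    (hf : Integrable f (gaussianReal μ v)) (hf' : Integrable f' (gaussianReal μ v))
    (htf : Integrable (fun t => (t - μ) • f t) (gaussianReal μ v)) :
    ∫ t, (t - μ) • f t ∂gaussianReal μ v = (v : ℝ) • ∫ t, f' t ∂gaussianReal μ v := by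
  rcases eq_or_ne v 0 with rfl | hv
  · simp
  have hv' : (v : ℝ) ≠ 0 := by exact_mod_cast hv
  have hderiv (t : ℝ) : HasDerivAt (fun t => gaussianPDFReal μ v t • f t)
      (gaussianPDFReal μ v t • (f' t - (v : ℝ)⁻¹ • (t - μ) • f t)) t := by
    refine ((hasDerivAt_gaussianPDFReal hv t).fun_smul (hff' t)).congr_deriv ?_
    module
  have hvtf : Integrable (fun t => (v : ℝ)⁻¹ • (t - μ) • f t) (gaussianReal μ v) := htf.smul _
  have hzero : ∫ t, f' t - (v : ℝ)⁻¹ • (t - μ) • f t ∂gaussianReal μ v = 0 := by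
    rw [integral_gaussianReal_eq_integral_smul hv]
    exact integral_eq_zero_of_hasDerivAt_of_integrable hderiv
      ((integrable_gaussianReal_iff_integrable_smul hv).1 (hf'.sub hvtf))
      ((integrable_gaussianReal_iff_integrable_smul hv).1 hf)
  rw [integral_sub hf' hvtf, integral_smul, sub_eq_zero] at hzero
  rw [hzero, smul_inv_smul₀ hv']

theorem gaussianPDFReal_smul_cexp_quadratic (hv : v ≠ 0) (a b : ℂ) (t : ℝ) :
    gaussianPDFReal μ v t • cexp (a * t ^ 2 / 2 + b * t) =
      ((√(2 * Real.pi * v))⁻¹ : ℝ) *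
        cexp (-(1 - v * a) / (2 * v) * t ^ 2 + (b + μ / v) * t + -μ ^ 2 / (2 * v)) := by
  have hv' : ((v : ℝ) : ℂ) ≠ 0 := by exact_mod_cast hv
  rw [gaussianPDFReal, real_smul, ofReal_mul, ofReal_exp, mul_assoc, ← Complex.exp_add]
  congr 2
  push_cast
  field

theorem re_neg_one_sub_mul_div_neg {a : ℂ} (hv : v ≠ 0) (ha : v * a.re < 1) :
    (-(1 - v * a) / (2 * v)).re < 0 := by
  have hv' : (0 : ℝ) < 2 * v := by positivity
  have hre : (-(1 - v * a)).re < 0 := by simpa using ha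
  have h := div_neg_of_neg_of_pos hre hv'
  rwa [← div_ofReal_re, ofReal_mul, ofReal_ofNat] at h

theorem integrable_cexp_quadratic_gaussianReal {a : ℂ} (ha : v * a.re < 1) (b : ℂ) :
    Integrable (fun t : ℝ => cexp (a * t ^ 2 / 2 + b * t)) (gaussianReal μ v) := by
  rcases eq_or_ne v 0 with rfl | hv
  · simp [gaussianReal_zero_var, integrable_dirac]
  simp only [integrable_gaussianReal_iff_integrable_smul hv,
    gaussianPDFReal_smul_cexp_quadratic hv]
  exact (integrable_cexp_quadratic' (re_neg_one_sub_mul_div_neg hv ha) _ _).const_mul _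

theorem integral_cexp_quadratic_gaussianReal {a : ℂ} (ha : v * a.re < 1) (b : ℂ) :
    ∫ t : ℝ, cexp (a * t ^ 2 / 2 + b * t) ∂gaussianReal μ v =
      1 / (1 - v * a).sqrt *
        cexp ((a * μ ^ 2 + 2 * b * μ + v * b ^ 2) / (2 * (1 - v * a))) := by
  rcases eq_or_ne v 0 with rfl | hv
  · simp only [gaussianReal_zero_var, integral_dirac, NNReal.coe_zero, ofReal_zero, zero_mul,
      sub_zero, Complex.sqrt_one]
    ring_nf
  have hv' : ((v : ℝ) : ℂ) ≠ 0 := by exact_mod_cast hv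
  have hre : 0 < (1 - v * a).re := by simpa using ha
  have hne : 1 - v * a ≠ 0 := fun h => by simp [h] at hre
  have hπv : 0 < 2 * Real.pi * v := by positivity
  have hbase : Real.pi / -(-(1 - v * a) / (2 * v)) = (2 * Real.pi * v : ℝ) / (1 - v * a) := by
    push_cast
    field
  have hnorm : (√(2 * Real.pi * v) : ℂ) ≠ 0 := by exact_mod_cast (Real.sqrt_pos.2 hπv).ne'
  simp only [integral_gaussianReal_eq_integral_smul hv, gaussianPDFReal_smul_cexp_quadratic hv]
  rw [integral_const_mul, integral_cexp_quadratic (re_neg_one_sub_mul_div_neg hv ha), hbase,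
    ofReal_div_cpow_one_div_two hπv hre, ← mul_assoc, ofReal_inv,
    ← mul_div_assoc, inv_mul_cancel₀ hnorm]
  congr 2
  field

end Gaussian

section Hermite

variable (x y : ℂ)

theorem integrable_add_I_mul_pow_gaussianReal (μ : ℝ) (v : ℝ≥0) (n : ℕ) :
    Integrable (fun t : ℝ => (x + I * t) ^ n) (gaussianReal μ v) := by
  have h : MemLp (fun t : ℝ => x + I * t) n (gaussianReal μ v) :=
    (memLp_const x).add ((memLp_id_gaussianReal n).ofReal.const_mul I)
  rw [← integrable_norm_iff (by fun_prop)]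
  simpa using h.integrable_norm_pow'

/-- With `W = x + I * t` one has `t - μ = -I * (W - (x + I * μ))`, so this is Gaussian integration
by parts applied to `W ^ (n + 1)`. -/
theorem integral_add_I_mul_pow_gaussianReal_add_two (μ : ℝ) (v : ℝ≥0) (n : ℕ) :
    ∫ t : ℝ, (x + I * t) ^ (n + 2) ∂gaussianReal μ v =
      (x + I * μ) * ∫ t : ℝ, (x + I * t) ^ (n + 1) ∂gaussianReal μ v -
        v * (n + 1) * ∫ t : ℝ, (x + I * t) ^ n ∂gaussianReal μ v := by
  have hint := integrable_add_I_mul_pow_gaussianReal x μ v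
  have hderiv (t : ℝ) : HasDerivAt (fun t : ℝ => (x + I * t) ^ (n + 1))
      ((n + 1) * I * (x + I * t) ^ n) t := by
    have hbase : HasDerivAt (fun t : ℝ => x + I * t) I t := by
      simpa using ((hasDerivAt_id t).ofReal_comp.const_mul I).const_add x
    refine (hbase.fun_pow (n + 1)).congr_deriv ?_
    push_cast
    ring
  have hsplit (t : ℝ) : (t - μ) • (x + I * t) ^ (n + 1) =
      -I * ((x + I * t) ^ (n + 2) - (x + I * μ) * (x + I * t) ^ (n + 1)) := by
    rw [real_smul, ofReal_sub]
    linear_combination ((t - μ) * (x + I * t) ^ (n + 1)) * I_sq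
  have hdiff : Integrable (fun t : ℝ => (x + I * t) ^ (n + 2) -
      (x + I * μ) * (x + I * t) ^ (n + 1)) (gaussianReal μ v) :=
    (hint (n + 2)).sub ((hint (n + 1)).const_mul _)
  have hparts := integral_sub_smul_gaussianReal hderiv (hint (n + 1)) ((hint n).const_mul _)
    (by simpa only [hsplit] using hdiff.const_mul (-I))
  simp only [hsplit, integral_const_mul, real_smul] at hparts
  rw [integral_sub (hint _) ((hint _).const_mul _), integral_const_mul] at hparts
  refine mul_left_cancel₀ (neg_ne_zero.2 I_ne_zero) ?_
  linear_combination hparts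

theorem probHermiteC_eq_integral : ∀ n : ℕ,
    probHermiteC n x = ∫ t : ℝ, (x + I * t) ^ n ∂gaussianReal 0 1
  | 0 => by simp [probHermiteC]
  | 1 => by
    have hid : ∫ t : ℝ, (t : ℂ) ∂gaussianReal 0 1 = 0 := by
      rw [integral_complex_ofReal, integral_id_gaussianReal, ofReal_zero]
    have hint : Integrable (fun t : ℝ => I * (t : ℂ)) (gaussianReal 0 1) := by
      simpa using integrable_add_I_mul_pow_gaussianReal 0 0 1 1
    simp [probHermiteC, integral_add (integrable_const x) hint, integral_const_mul, hid]
  | n + 2 => by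
    rw [probHermiteC, probHermiteC_eq_integral n, probHermiteC_eq_integral (n + 1),
      integral_add_I_mul_pow_gaussianReal_add_two]
    simp

theorem integrable_exp_mul_sq_norm_gaussianReal {μ : ℝ} {v : ℝ≥0} {r : ℝ} (hr : v * r < 1) :
    Integrable (fun t : ℝ => Real.exp (r * ‖x + I * t‖ ^ 2 / 2)) (gaussianReal μ v) := by
  have h := (integrable_cexp_quadratic_gaussianReal (μ := μ) (v := v) (a := r) (by simpa using hr)
    (r * x.im)).norm.const_mul (Real.exp (r * ‖x‖ ^ 2 / 2))
  refine h.congr (ae_of_all _ fun t => ?_)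
  have hnorm : ‖x + I * t‖ ^ 2 = ‖x‖ ^ 2 + 2 * x.im * t + t ^ 2 := by
    simp only [Complex.sq_norm, normSq_apply, add_re, add_im, mul_re, mul_im, I_re, I_im, ofReal_re,
      ofReal_im]
    ring
  have hre : ((r : ℂ) * t ^ 2 / 2 + r * x.im * t).re = r * t ^ 2 / 2 + r * x.im * t := by
    norm_cast
  beta_reduce
  rw [norm_exp, hre, ← Real.exp_add, hnorm]
  ring_nf

theorem integrable_exp_norm_mul_gaussianReal_prod {ρ : ℂ} (hρ : ‖ρ‖ < 1) :
    Integrable (fun p : ℝ × ℝ => Real.exp ‖ρ * (x + I * p.1) * (y + I * p.2)‖)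
      ((gaussianReal 0 1).prod (gaussianReal 0 1)) := by
  have hr : ((1 : ℝ≥0) : ℝ) * ‖ρ‖ < 1 := by simpa using hρ
  refine ((integrable_exp_mul_sq_norm_gaussianReal x hr).mul_prod
    (integrable_exp_mul_sq_norm_gaussianReal y hr)).mono' (by fun_prop) (ae_of_all _ fun p => ?_)
  rw [Real.norm_of_nonneg (Real.exp_pos _).le, ← Real.exp_add, Real.exp_le_exp, norm_mul, norm_mul]
  have hamgm := two_mul_le_add_sq ‖x + I * p.1‖ ‖y + I * p.2‖
  nlinarith [norm_nonneg ρ]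

theorem integral_cexp_mul_add_I_mul_gaussianReal (μ : ℝ) (v : ℝ≥0) (c : ℂ) :
    ∫ t : ℝ, cexp (c * (x + I * t)) ∂gaussianReal μ v =
      cexp (c * (x + I * μ) - v * c ^ 2 / 2) := by
  have hmgf := complexMGF_id_gaussianReal (μ := μ) (v := v) (c * I)
  simp only [complexMGF, id] at hmgf
  simp only [mul_add, Complex.exp_add, integral_const_mul, ← mul_assoc, hmgf]
  rw [← Complex.exp_add, ← Complex.exp_add]
  congr 1
  linear_combination (v * c ^ 2 / 2) * I_sq

theorem integral_cexp_mul_gaussianReal_prod {ρ : ℂ} (hρ : ‖ρ‖ < 1) :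
    ∫ p : ℝ × ℝ, cexp (ρ * (x + I * p.1) * (y + I * p.2))
        ∂(gaussianReal 0 1).prod (gaussianReal 0 1) =
      1 / (1 - ρ ^ 2).sqrt * cexp ((x ^ 2 + y ^ 2) / 2) *
        cexp (-(x ^ 2 + y ^ 2 - 2 * ρ * x * y) / (2 * (1 - ρ ^ 2))) := by
  have hint : Integrable (fun p : ℝ × ℝ => cexp (ρ * (x + I * p.1) * (y + I * p.2)))
      ((gaussianReal 0 1).prod (gaussianReal 0 1)) :=
    (integrable_exp_norm_mul_gaussianReal_prod x y hρ).mono' (by fun_prop)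
      (ae_of_all _ fun p => norm_exp_le_exp_norm _)
  have hre : (ρ ^ 2).re < 1 := (re_le_norm _).trans_lt <| by
    rw [norm_pow]
    exact pow_lt_one₀ (norm_nonneg ρ) hρ two_ne_zero
  have hne : 1 - ρ ^ 2 ≠ 0 := fun h => by simp [← sub_eq_zero.1 h] at hre
  have hinner (s : ℝ) : ∫ t : ℝ, cexp (ρ * (x + I * s) * (y + I * t)) ∂gaussianReal 0 1 =
      cexp (ρ * x * y - ρ ^ 2 * x ^ 2 / 2) *
        cexp (ρ ^ 2 * s ^ 2 / 2 + I * ρ * (y - ρ * x) * s) := by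
    rw [integral_cexp_mul_add_I_mul_gaussianReal, ← Complex.exp_add]
    congr 1
    push_cast
    linear_combination (-ρ ^ 2 * s ^ 2 / 2) * I_sq
  have hexponent : ρ * x * y - ρ ^ 2 * x ^ 2 / 2 +
      (I * ρ * (y - ρ * x)) ^ 2 / (2 * (1 - ρ ^ 2)) =
        (x ^ 2 + y ^ 2) / 2 + -(x ^ 2 + y ^ 2 - 2 * ρ * x * y) / (2 * (1 - ρ ^ 2)) := by
    rw [mul_pow, mul_pow, I_sq]
    field
  rw [integral_prod _ hint]
  simp only [hinner, integral_const_mul]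
  rw [integral_cexp_quadratic_gaussianReal (by simpa using hre), mul_assoc (1 / _),
    ← Complex.exp_add, ← hexponent, Complex.exp_add]
  simp only [NNReal.coe_one, ofReal_one, ofReal_zero, one_mul]
  ring_nf

end Hermite

theorem ofReal_probHermite (x : ℝ) : ∀ n : ℕ, (probHermite n x : ℂ) = probHermiteC n x
  | 0 => by simp [probHermite, probHermiteC]
  | 1 => by simp [probHermite, probHermiteC]
  | n + 2 => by
    simp [probHermite, probHermiteC, ofReal_probHermite x n, ofReal_probHermite x (n + 1)]

theorem mehler_general (x y ρ : ℂ) (hρ : ‖ρ‖ < 1) :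
    HasSum (fun n : ℕ => ρ ^ n / n.factorial * probHermiteC n x * probHermiteC n y)
      (1 / (1 - ρ ^ 2).sqrt * cexp ((x ^ 2 + y ^ 2) / 2) *
        cexp (-(x ^ 2 + y ^ 2 - 2 * ρ * x * y) / (2 * (1 - ρ ^ 2)))) := by
  have hmoment (n : ℕ) : ∫ p : ℝ × ℝ, (ρ * (x + I * p.1) * (y + I * p.2)) ^ n
        ∂(gaussianReal 0 1).prod (gaussianReal 0 1) =
      ρ ^ n * (probHermiteC n x * probHermiteC n y) := by
    simp only [mul_pow, mul_assoc, integral_const_mul, probHermiteC_eq_integral]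
    rw [integral_prod_mul (fun s : ℝ => (x + I * s) ^ n) fun t : ℝ => (y + I * t) ^ n]
  rw [← integral_cexp_mul_gaussianReal_prod x y hρ]
  convert! hasSum_integral_pow_div_factorial (by fun_prop)
    (integrable_exp_norm_mul_gaussianReal_prod x y hρ) using 2 with n
  rw [hmoment]
  ring

/-- Mehler formula. -/
theorem mehler (x y ρ : ℝ) (hρ : |ρ| < 1) :
    HasSum (fun n : ℕ => ρ ^ n / n.factorial * probHermite n x * probHermite n y)
      (1 / Real.sqrt (1 - ρ ^ 2) * Real.exp ((x ^ 2 + y ^ 2) / 2) *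
        Real.exp (-(x ^ 2 + y ^ 2 - 2 * ρ * x * y) / (2 * (1 - ρ ^ 2)))) := by
  have hpos : 0 ≤ 1 - ρ ^ 2 := sub_nonneg.2 ((sq_lt_one_iff_abs_lt_one ρ).2 hρ).le
  have hsqrt : Complex.sqrt (1 - ρ ^ 2) = (√(1 - ρ ^ 2) : ℝ) := by
    exact_mod_cast sqrt_ofReal_of_nonneg hpos
  rw [← hasSum_ofReal]
  simpa [ofReal_probHermite, hsqrt] using mehler_general x y ρ (by simpa using hρ)
end
end
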